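/- arXiv:2212.01934 — 2 statements merged into one kernel-verified Lean document; each statement's English description precedes it below -/
import Mathlib

section
/- Let G be a group acting by isometries on a metric space X, let x ∈ X, and let D_x be the Dirichlet domain of x. Assume the G-translates of D_x cover X, i.e. ⋃ (γ : G), γ • D_x = X. Then for all y, z ∈ X, the quotient extended distance satisfies ⨅ (γ : G), edist y (γ • z) ≤ EMetric.diam D_x. (This is the inequality dia(S) ≤ dia(D_x) for the quotient surface S = X/G.) -/
open Pointwise

/-- If the `G`-translates of the Dirichlet domain of `x` cover `X`, then the
quotient extended distance between any two orbits is at most the diameter of the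
Dirichlet domain: `dia(S) ≤ dia(D_x)`. -/
theorem quotient_diam_le_dirichlet_diam {G X : Type*} [Group G] [MetricSpace X]
    [MulAction G X] (hiso : ∀ (γ : G) (y z : X), dist (γ • y) (γ • z) = dist y z)
    (x : X)
    (hcover : ⋃ γ : G, γ • {y : X | ∀ γ' : G, dist x y ≤ dist (γ' • x) y} = Set.univ) :
    ∀ y z : X,
      (⨅ γ : G, edist y (γ • z)) ≤
        EMetric.diam {y : X | ∀ γ' : G, dist x y ≤ dist (γ' • x) y} := by
  intro y z
  have hy : y ∈ ⋃ γ : G, γ • {y : X | ∀ γ' : G, dist x y ≤ dist (γ' • x) y} := by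
    rw [hcover]; trivial
  have hz : z ∈ ⋃ γ : G, γ • {y : X | ∀ γ' : G, dist x y ≤ dist (γ' • x) y} := by
    rw [hcover]; trivial
  obtain ⟨a, ha⟩ := Set.mem_iUnion.1 hy
  obtain ⟨b, hb⟩ := Set.mem_iUnion.1 hz
  obtain ⟨p, hp, rfl⟩ := Set.mem_smul_set.1 ha
  obtain ⟨q, hq, rfl⟩ := Set.mem_smul_set.1 hb
  refine (iInf_le _ (a * b⁻¹)).trans ?_
  rw [mul_smul, inv_smul_smul, edist_dist, hiso, ← edist_dist]
  exact Metric.edist_le_ediam_of_mem hp hq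
end

section
/- Let ℍ be the hyperbolic plane (the upper half-plane with its hyperbolic metric). For p, q ∈ ℍ write [p,q] := {z ∈ ℍ | dist p z + dist z q = dist p q} for the geodesic segment between p and q. Let C ⊆ ℍ be a closed set that is geodesically convex (for all p, q ∈ C, [p,q] ⊆ C). Let p₀, q₀, p₁, q₁ ∈ frontier C, and let α₀ be an injective path from p₀ to q₀ and α₁ an injective path from p₁ to q₁, both with image contained in C, such that every point of (range α₀) ∩ (range α₁) lies in {p₀, q₀} ∩ {p₁, q₁} (the paths are disjoint except possibly at common endpoints). Assume furthermore that the four points p₀, q₀, p₁, q₁ are not collinear, i.e. there do not exist u, v among these four points such that all four points lie on the segment [u,v]. Then the open segments are disjoint: ([p₀,q₀] \ {p₀,q₀}) ∩ ([p₁,q₁] \ {p₁,q₁}) = ∅. -/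
open UpperHalfPlane

/-- The geodesic segment between `p` and `q` in the hyperbolic plane. -/
def hypSeg (p q : UpperHalfPlane) : Set UpperHalfPlane :=
  {z | dist p z + dist z q = dist p q}

open unitInterval in
theorem aux_log_lift (F : C(I × I, ℂ)) (hF : ∀ x, F x ≠ 0) :
    ∃ L : C(I × I, ℂ), ∀ x, Complex.exp (L x) = F x := by
  let G : C(ℝ × ℝ, {z : ℂ // z ≠ 0}) :=
    ⟨fun x => ⟨F (Set.projIcc 0 1 zero_le_one x.1, Set.projIcc 0 1 zero_le_one x.2), hF _⟩, by
      have : Continuous (Set.projIcc (0 : ℝ) 1 zero_le_one) := continuous_projIcc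
      fun_prop⟩
  obtain ⟨L, ⟨-, hL⟩, -⟩ := Complex.isCoveringMap_exp.existsUnique_continuousMap_lifts G (0, 0)
    (Complex.log (G (0,0)).1) (by ext; simp [Complex.exp_log (G (0, 0)).2])
  refine ⟨⟨fun x => L (x.1, x.2), by fun_prop⟩, fun x => ?_⟩
  have := congrArg Subtype.val (congrFun hL (x.1, x.2))
  simpa [G] using this

open unitInterval in
theorem aux_real (g : I → ℝ) (hg : Continuous g) (hc : ∀ t, 0 ≤ Real.cos (g t))
    (hs : 0 < Real.sin (g 1 - g 0)) : g 0 < g 1 := by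
  by_contra! h
  have h1 : g 1 + Real.pi < g 0 := by
    by_contra! h2
    have : Real.sin (g 1 - g 0) ≤ 0 :=
      Real.sin_nonpos_of_nonpos_of_neg_pi_le (by linarith) (by linarith)
    linarith
  have key : ∀ y ∈ Set.Icc (g 1) (g 0), 0 ≤ Real.cos y := by
    intro y hy
    obtain ⟨t, rfl⟩ := mem_range_of_exists_le_of_exists_ge hg ⟨1, hy.1⟩ ⟨0, hy.2⟩
    exact hc t
  have hp := Real.pi_pos
  have a1 := key (g 0 - Real.pi) ⟨by linarith, by linarith⟩
  have a2 := key (g 1 + Real.pi) ⟨by linarith, by linarith⟩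
  rw [Real.cos_sub_pi] at a1
  rw [Real.cos_add_pi] at a2
  have b1 : Real.cos (g 0) = 0 := le_antisymm (by linarith) (hc 0)
  have b2 : Real.cos (g 1) = 0 := le_antisymm (by linarith) (hc 1)
  rw [Real.sin_sub, b1, b2] at hs
  simp at hs

/-- cross product -/
def auxCross (a b : ℂ) : ℝ := a.re * b.im - a.im * b.re

open unitInterval in
theorem aux_edge (L : I → ℂ) (hL : Continuous L) (f : ℂ →L[ℝ] ℝ) (hf : f ≠ 0)
    (hc : ∀ t, 0 ≤ f (Complex.exp (L t)))
    (hs : 0 < auxCross (Complex.exp (L 0)) (Complex.exp (L 1))) : (L 0).im < (L 1).im := by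
  set n : ℂ := ⟨f 1, f Complex.I⟩ with hn
  have hfw : ∀ w : ℂ, f w = w.re * f 1 + w.im * f Complex.I := by
    intro w
    conv_lhs => rw [show w = w.re • (1:ℂ) + w.im • Complex.I by simp [Complex.re_add_im]]
    rw [map_add, map_smul, map_smul]; simp
  have hn0 : n ≠ 0 := by
    intro h
    apply hf
    ext w
    have h1 := congrArg Complex.re h
    have h2 := congrArg Complex.im h
    simp [hn] at h1 h2
    simp [hfw w, h1, h2]
  set w := Complex.log n
  have hw : Complex.exp w = n := Complex.exp_log hn0
  have e1 : f 1 = Real.exp w.re * Real.cos w.im := by rw [← Complex.exp_re, hw]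
  have e2 : f Complex.I = Real.exp w.re * Real.sin w.im := by rw [← Complex.exp_im, hw]
  have := aux_real (fun t => (L t).im - w.im) (by fun_prop) (fun t => by
    have h := hc t
    rw [hfw, e1, e2, Complex.exp_re, Complex.exp_im] at h
    rw [Real.cos_sub]
    have : 0 < Real.exp (L t).re * Real.exp w.re := by positivity
    refine nonneg_of_mul_nonneg_right (a := Real.exp (L t).re * Real.exp w.re) ?_ this
    linarith) (by
    unfold auxCross at hs
    rw [Complex.exp_re, Complex.exp_im, Complex.exp_re, Complex.exp_im] at hs
    rw [show (L 1).im - w.im - ((L 0).im - w.im) = (L 1).im - (L 0).im by ring, Real.sin_sub]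
    have : 0 < Real.exp (L 0).re * Real.exp (L 1).re := by positivity
    refine pos_of_mul_pos_right (a := Real.exp (L 0).re * Real.exp (L 1).re) ?_ this.le
    linarith)
  simpa using this

theorem aux_support {D : Set ℂ} (hD : Convex ℝ D) (hi : (interior D).Nonempty) {P : ℂ}
    (hP : P ∉ interior D) : ∃ f : ℂ →L[ℝ] ℝ, f ≠ 0 ∧ ∀ w ∈ D, f w ≤ f P := by
  obtain ⟨f, hf⟩ := geometric_hahn_banach_open_point hD.interior isOpen_interior hP
  refine ⟨f, ?_, ?_⟩
  · rintro rfl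
    obtain ⟨a, ha⟩ := hi
    simpa using hf a ha
  · intro w hw
    have h1 : w ∈ closure (interior D) := by
      rw [hD.closure_interior_eq_closure_of_nonempty_interior hi]; exact subset_closure hw
    have : closure (interior D) ⊆ {w | f w ≤ f P} :=
      closure_minimal (fun a ha => (hf a ha).le) (isClosed_le (by fun_prop) (by fun_prop))
    exact this h1

theorem aux_interior {D : Set ℂ} (hD : Convex ℝ D) {P0 Q0 P1 Q1 : ℂ} (h1 : P0 ∈ D) (h2 : Q0 ∈ D)
    (h3 : P1 ∈ D) (h4 : Q1 ∈ D) (hc : auxCross (Q0 - P0) (Q1 - P1) ≠ 0) :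
    (interior D).Nonempty := by
  rw [hD.interior_nonempty_iff_affineSpan_eq_top,
    AffineSubspace.affineSpan_eq_top_iff_vectorSpan_eq_top_of_nonempty _ _ _ ⟨P0, h1⟩]
  rw [eq_top_iff]
  rintro w -
  have m1 : Q0 - P0 ∈ vectorSpan ℝ D := vsub_mem_vectorSpan ℝ h2 h1
  have m2 : Q1 - P1 ∈ vectorSpan ℝ D := vsub_mem_vectorSpan ℝ h4 h3
  generalize Q0 - P0 = u at *
  generalize Q1 - P1 = v at *
  have : w = (auxCross w v / auxCross u v) • u + (auxCross u w / auxCross u v) • v := by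
    apply Complex.ext
    · simp
      field_simp
      unfold auxCross; ring
    · simp
      field_simp
      unfold auxCross; ring
  rw [this]
  exact add_mem (Submodule.smul_mem _ _ m1) (Submodule.smul_mem _ _ m2)

open unitInterval in
theorem aux_euclid {D : Set ℂ} (hD : Convex ℝ D) {P0 Q0 P1 Q1 X : ℂ}
    (iP0 : P0 ∉ interior D) (iQ0 : Q0 ∉ interior D)
    (iP1 : P1 ∉ interior D) (iQ1 : Q1 ∉ interior D)
    (a b : C(I, ℂ)) (ha0 : a 0 = P0) (ha1 : a 1 = Q0) (hb0 : b 0 = P1) (hb1 : b 1 = Q1)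
    (ha : ∀ t, a t ∈ D) (hb : ∀ t, b t ∈ D) (hab : ∀ s t, a s ≠ b t)
    (hX0 : X ∈ openSegment ℝ P0 Q0) (hX1 : X ∈ openSegment ℝ P1 Q1)
    (hc : 0 < auxCross (Q0 - P0) (Q1 - P1)) : False := by
  have hi := aux_interior hD (ha0 ▸ ha 0) (ha1 ▸ ha 1) (hb0 ▸ hb 0) (hb1 ▸ hb 1) hc.ne'
  obtain ⟨fP0, nP0, sP0⟩ := aux_support hD hi iP0
  obtain ⟨fQ0, nQ0, sQ0⟩ := aux_support hD hi iQ0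
  obtain ⟨fP1, nP1, sP1⟩ := aux_support hD hi iP1
  obtain ⟨fQ1, nQ1, sQ1⟩ := aux_support hD hi iQ1
  obtain ⟨L, hL⟩ := aux_log_lift ⟨fun x => a x.1 - b x.2, by fun_prop⟩
    (fun x => sub_ne_zero.2 (hab _ _))
  simp only [ContinuousMap.coe_mk] at hL
  obtain ⟨s', s, hs', hs, hss, hXs⟩ := hX0
  obtain ⟨t', t, ht', ht, htt, hXt⟩ := hX1
  obtain rfl : s' = 1 - s := by linarith
  obtain rfl : t' = 1 - t := by linarith
  have r := congrArg Complex.re (hXs.trans hXt.symm)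
  have i := congrArg Complex.im (hXs.trans hXt.symm)
  simp at r i
  have c1 : auxCross (P0 - P1) (P0 - Q1) = s * auxCross (Q0 - P0) (Q1 - P1) := by
    simp only [auxCross, Complex.sub_re, Complex.sub_im]
    linear_combination (P1.im - Q1.im) * r - (P1.re - Q1.re) * i
  have c2 : auxCross (P0 - Q1) (Q0 - Q1) = (1 - t) * auxCross (Q0 - P0) (Q1 - P1) := by
    simp only [auxCross, Complex.sub_re, Complex.sub_im]
    linear_combination (Q0.im - P0.im) * r - (Q0.re - P0.re) * i
  have c3 : auxCross (Q0 - Q1) (Q0 - P1) = (1 - s) * auxCross (Q0 - P0) (Q1 - P1) := by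
    simp only [auxCross, Complex.sub_re, Complex.sub_im]
    linear_combination (-P1.im + Q1.im) * r - (-P1.re + Q1.re) * i
  have c4 : auxCross (Q0 - P1) (P0 - P1) = t * auxCross (Q0 - P0) (Q1 - P1) := by
    simp only [auxCross, Complex.sub_re, Complex.sub_im]
    linear_combination (P0.im - Q0.im) * r - (P0.re - Q0.re) * i
  have e1 := aux_edge (fun t => L (0, t)) (by fun_prop) fP0 nP0
    (fun t => by rw [hL]; simpa [ha0] using sP0 _ (hb t))
    (by simp only [hL, ha0, hb0, hb1, c1]; positivity)
  have e2 := aux_edge (fun t => L (t, 1)) (by fun_prop) (-fQ1) (neg_ne_zero.2 nQ1)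
    (fun t => by rw [hL]; simpa [hb1] using sQ1 _ (ha t))
    (by simp only [hL, ha0, ha1, hb1, c2]; positivity)
  have e3 := aux_edge (fun t => L (1, σ t)) (by fun_prop) fQ0 nQ0
    (fun t => by rw [hL]; simpa [ha1] using sQ0 _ (hb _))
    (by simp only [hL, ha1, hb0, hb1, symm_zero, symm_one, c3]; positivity)
  have e4 := aux_edge (fun t => L (σ t, 0)) (by fun_prop) (-fP1) (neg_ne_zero.2 nP1)
    (fun t => by rw [hL]; simpa [hb0] using sP1 _ (ha _))
    (by simp only [hL, ha0, ha1, hb0, symm_zero, symm_one, c4]; positivity)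
  simp at e1 e2 e3 e4
  linarith

/-- The projective (parabola) model: geodesics become straight lines. -/
noncomputable def kmap (z : UpperHalfPlane) : ℂ := ⟨z.re, z.re ^ 2 + z.im ^ 2⟩

theorem kmap_injective : Function.Injective kmap := by
  intro z w h
  have h1 := congrArg Complex.re h
  have h2 := congrArg Complex.im h
  simp only [kmap] at h1 h2
  rw [h1] at h2
  have h3 : z.im = w.im := by
    have := z.im_pos
    have := w.im_pos
    nlinarith
  exact UpperHalfPlane.ext_re_im h1 h3

theorem kmap_continuous : Continuous kmap := by
  have h : kmap = fun z : UpperHalfPlane =>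
      ((z.re : ℝ) : ℂ) + ((z.re ^ 2 + z.im ^ 2 : ℝ) : ℂ) * Complex.I := by
    funext z
    apply Complex.ext <;> simp [kmap, -Complex.ofReal_pow, -Complex.ofReal_add]
  rw [h]
  have := UpperHalfPlane.continuous_re
  have := UpperHalfPlane.continuous_im
  fun_prop

theorem aux_identities {a b c d x y t : ℝ} (hb : 0 < b) (hd : 0 < d) (hy : 0 < y)
    (h1 : x = (1 - t) * a + t * c)
    (h2 : x ^ 2 + y ^ 2 = (1 - t) * (a ^ 2 + b ^ 2) + t * (c ^ 2 + d ^ 2))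
    {c1 c2 c3 : ℝ} (e1 : c1 = ((a - x) ^ 2 + b ^ 2 + y ^ 2) / (2 * b * y))
    (e2 : c2 = ((x - c) ^ 2 + y ^ 2 + d ^ 2) / (2 * y * d))
    (e3 : c3 = ((a - c) ^ 2 + b ^ 2 + d ^ 2) / (2 * b * d)) :
    c1 ^ 2 - 1 = (t * d / y) ^ 2 * (c3 ^ 2 - 1) ∧
    c2 ^ 2 - 1 = ((1 - t) * b / y) ^ 2 * (c3 ^ 2 - 1) ∧
    c3 - c1 * c2 = (t * d / y) * ((1 - t) * b / y) * (c3 ^ 2 - 1) := by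
  obtain ⟨α, hα⟩ : ∃ α, α = (1 - t) * b / y := ⟨_, rfl⟩
  obtain ⟨β, hβ⟩ : ∃ β, β = t * d / y := ⟨_, rfl⟩
  rw [← hα, ← hβ]
  have k1 : c1 = α + β * c3 := by
    rw [e1, e3, hα, hβ]; field_simp
    linear_combination h2 - 2 * a * h1
  have k2 : c2 = α * c3 + β := by
    rw [e2, e3, hα, hβ]; field_simp
    linear_combination h2 - 2 * c * h1
  have k3 : 1 = α ^ 2 + β ^ 2 + 2 * α * β * c3 := by
    rw [e3, hα, hβ]; field_simp
    linear_combination h2 - (x + (1 - t) * a + t * c) * h1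
  refine ⟨?_, ?_, ?_⟩
  · rw [k1]; linear_combination -k3
  · rw [k2]; linear_combination -k3
  · rw [k1, k2]; linear_combination c3 * k3

set_option maxHeartbeats 1000000 in
theorem mem_hypSeg_iff (p q z : UpperHalfPlane) :
    z ∈ hypSeg p q ↔ kmap z ∈ segment ℝ (kmap p) (kmap q) := by
  have e1 := UpperHalfPlane.cosh_dist' p z
  have e2 := UpperHalfPlane.cosh_dist' z q
  have e3 := UpperHalfPlane.cosh_dist' p q
  have hb := p.im_pos
  have hd := q.im_pos
  have hy := z.im_pos
  have A0 : 0 ≤ dist p z := dist_nonneg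
  have B0 : 0 ≤ dist z q := dist_nonneg
  have C0 : 0 ≤ dist p q := dist_nonneg
  have sA := Real.sinh_nonneg_iff.2 A0
  have sB := Real.sinh_nonneg_iff.2 B0
  have sC := Real.sinh_nonneg_iff.2 C0
  have qA := Real.sinh_sq (dist p z)
  have qB := Real.sinh_sq (dist z q)
  have qC := Real.sinh_sq (dist p q)
  constructor
  · intro h
    change dist p z + dist z q = dist p q at h
    by_cases hpq : p = q
    · subst hpq
      rw [dist_self] at h
      have : dist p z = 0 := by linarith
      rw [dist_eq_zero] at this
      subst this
      simp
    have c3gt : 1 < Real.cosh (dist p q) := Real.one_lt_cosh.2 (dist_pos.2 hpq).ne'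
    have hadd := Real.cosh_add (dist p z) (dist z q)
    rw [h] at hadd
    have hdet : ((q.re - p.re) * ((z.re ^ 2 + z.im ^ 2) - (p.re ^ 2 + p.im ^ 2)) -
        (z.re - p.re) * ((q.re ^ 2 + q.im ^ 2) - (p.re ^ 2 + p.im ^ 2))) = 0 := by
      have gram : 1 + 2 * Real.cosh (dist p z) * Real.cosh (dist z q) * Real.cosh (dist p q)
          - Real.cosh (dist p z) ^ 2 - Real.cosh (dist z q) ^ 2 - Real.cosh (dist p q) ^ 2
          = 0 := by
        have : (Real.cosh (dist p q) - Real.cosh (dist p z) * Real.cosh (dist z q)) ^ 2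
          = (Real.cosh (dist p z) ^ 2 - 1) * (Real.cosh (dist z q) ^ 2 - 1) := by
          rw [← qA, ← qB, hadd]; ring
        linear_combination -this
      rw [e1, e2, e3] at gram
      field_simp at gram
      refine pow_eq_zero_iff (two_ne_zero) |>.1 ?_
      linear_combination gram
    obtain ⟨t, ht1, ht2⟩ : ∃ t : ℝ, z.re = (1 - t) * p.re + t * q.re ∧
        z.re ^ 2 + z.im ^ 2 = (1 - t) * (p.re ^ 2 + p.im ^ 2) + t * (q.re ^ 2 + q.im ^ 2) := by
      by_cases hre : q.re - p.re = 0
      · have hN : (q.re ^ 2 + q.im ^ 2) - (p.re ^ 2 + p.im ^ 2) ≠ 0 := by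
          intro h0
          apply hpq
          apply kmap_injective
          apply Complex.ext <;> simp only [kmap] <;> linarith
        rw [hre] at hdet
        have hz : z.re - p.re = 0 := by
          rcases mul_eq_zero.1 (show (z.re - p.re) *
            ((q.re ^ 2 + q.im ^ 2) - (p.re ^ 2 + p.im ^ 2)) = 0 by linarith) with h | h
          · exact h
          · exact absurd h hN
        refine ⟨((z.re ^ 2 + z.im ^ 2) - (p.re ^ 2 + p.im ^ 2)) /
          ((q.re ^ 2 + q.im ^ 2) - (p.re ^ 2 + p.im ^ 2)), ?_, ?_⟩
        · rw [show q.re = p.re by linarith]; linarith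
        · field_simp; ring
      · refine ⟨(z.re - p.re) / (q.re - p.re), ?_, ?_⟩
        · field_simp; ring
        · field_simp; linarith
    obtain ⟨-, -, k⟩ := aux_identities hb hd hy ht1 ht2 e1 e2 e3
    have hnn : 0 ≤ (t * q.im / z.im) * ((1 - t) * p.im / z.im) := by
      have h1 : 0 ≤ Real.cosh (dist p q) - Real.cosh (dist p z) * Real.cosh (dist z q) := by
        rw [hadd]; nlinarith
      rw [k] at h1
      exact nonneg_of_mul_nonneg_left h1 (by nlinarith)
    have htt : 0 ≤ t * (1 - t) := by
      have : (t * q.im / z.im) * ((1 - t) * p.im / z.im) =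
        (t * (1 - t)) * (q.im * p.im / z.im ^ 2) := by field_simp
      rw [this] at hnn
      exact nonneg_of_mul_nonneg_left hnn (by positivity)
    refine ⟨1 - t, t, by clear * - htt; nlinarith, by clear * - htt; nlinarith, by ring, ?_⟩
    apply Complex.ext
    · simpa [kmap] using ht1.symm
    · simpa [kmap] using ht2.symm
  · rintro ⟨t', t, ht', ht, htt, h⟩
    obtain rfl : t' = 1 - t := by linarith
    have h1 := congrArg Complex.re h
    have h2 := congrArg Complex.im h
    simp [kmap] at h1 h2
    obtain ⟨k1, k2, k3⟩ := aux_identities hb hd hy h1.symm h2.symm e1 e2 e3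
    rw [← qA, ← qC, ← mul_pow] at k1
    rw [← qB, ← qC, ← mul_pow] at k2
    have k1' := (sq_eq_sq₀ sA (by positivity)).1 k1
    have k2' := (sq_eq_sq₀ sB (by positivity)).1 k2
    have : Real.cosh (dist p z + dist z q) = Real.cosh (dist p q) := by
      rw [Real.cosh_add, k1', k2']
      rw [← qC] at k3
      linear_combination -k3
    exact Real.cosh_strictMonoOn.injOn (add_nonneg A0 B0) C0 this

theorem kmap_surj {w : ℂ} (h : w.re ^ 2 < w.im) : ∃ z, kmap z = w := by
  refine ⟨⟨⟨w.re, Real.sqrt (w.im - w.re ^ 2)⟩, Real.sqrt_pos.2 (by linarith)⟩, ?_⟩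
  apply Complex.ext
  · simp [kmap, UpperHalfPlane.re]
  · simp [kmap, UpperHalfPlane.re, UpperHalfPlane.im, Real.sq_sqrt (show 0 ≤ w.im - w.re ^ 2 by linarith)]

theorem kmap_image_convex (C : Set UpperHalfPlane)
    (hCconv : ∀ p ∈ C, ∀ q ∈ C, hypSeg p q ⊆ C) : Convex ℝ (kmap '' C) := by
  rw [convex_iff_segment_subset]
  rintro _ ⟨p, hp, rfl⟩ _ ⟨q, hq, rfl⟩ w hw
  have hw' := hw
  obtain ⟨t', t, ht', ht, htt, h⟩ := hw
  obtain ⟨z, rfl⟩ : ∃ z, kmap z = w := by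
    apply kmap_surj
    obtain rfl : t' = 1 - t := by linarith
    rw [← h]
    have hb := p.im_pos
    have hd := q.im_pos
    simp [kmap]
    have : 0 < (1 - t) * p.im ^ 2 + t * q.im ^ 2 := by
      rcases ht.eq_or_lt with rfl | h'
      · simp; positivity
      · positivity
    nlinarith [mul_nonneg (mul_nonneg ht' ht) (sq_nonneg (p.re - q.re))]
  exact ⟨z, hCconv p hp q hq ((mem_hypSeg_iff p q z).2 hw'), rfl⟩

theorem kmap_frontier {C : Set UpperHalfPlane} {p : UpperHalfPlane} (hp : p ∈ frontier C) :
    kmap p ∉ interior (kmap '' C) := by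
  intro h
  apply hp.2
  refine interior_maximal (?_ : kmap ⁻¹' interior (kmap '' C) ⊆ C)
    (isOpen_interior.preimage kmap_continuous) h
  intro z hz
  obtain ⟨w, hw, e⟩ := interior_subset hz
  exact kmap_injective e ▸ hw

theorem aux_collinear (S : Set UpperHalfPlane) (hS : S.Finite) (hne : S.Nonempty) (X u : ℂ)
    (h : ∀ w ∈ S, ∃ c : ℝ, kmap w = X + c • u) :
    ∃ a ∈ S, ∃ b ∈ S, S ⊆ hypSeg a b := by
  choose! c hc using h
  obtain ⟨m, hm, hm'⟩ := Set.exists_min_image S c hS hne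
  obtain ⟨M, hM, hM'⟩ := Set.exists_max_image S c hS hne
  refine ⟨m, hm, M, hM, fun w hw => (mem_hypSeg_iff _ _ _).2 ?_⟩
  have : c w ∈ segment ℝ (c m) (c M) := by
    rw [segment_eq_Icc (hm' M hM)]; exact ⟨hm' w hw, hM' w hw⟩
  obtain ⟨a, b, ha, hb, hab, e⟩ := this
  refine ⟨a, b, ha, hb, hab, ?_⟩
  rw [hc m hm, hc M hM, hc w hw, ← e]
  obtain rfl : a = 1 - b := by linarith
  simp only [smul_eq_mul]
  module

theorem aux_parallel {u v : ℂ} (hu : u ≠ 0) (h : auxCross u v = 0) : ∃ k : ℝ, v = k • u := by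
  unfold auxCross at h
  by_cases h0 : u.re = 0
  · have h1 : u.im ≠ 0 := fun h1 => hu (Complex.ext h0 h1)
    have h2 : v.re = 0 := by
      rw [h0] at h
      have : u.im * v.re = 0 := by linarith
      exact (mul_eq_zero.1 this).resolve_left h1
    refine ⟨v.im / u.im, Complex.ext ?_ ?_⟩
    · simp [h0, h2]
    · simp [h1]
  · refine ⟨v.re / u.re, Complex.ext ?_ ?_⟩
    · simp [h0]
    · simp; field_simp; linarith

/-- Observation in the proof sketch of Lemma 5.3: in a closed geodesically convex
subset of the hyperbolic plane, the geodesic chords joining the endpoint pairs of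
two simple, essentially disjoint paths with endpoints on the boundary (and with
the four endpoints not collinear) are disjoint in their interiors. -/
theorem geodesic_chords_of_disjoint_paths_disjoint
    (C : Set UpperHalfPlane) (hCclosed : IsClosed C)
    (hCconv : ∀ p ∈ C, ∀ q ∈ C, hypSeg p q ⊆ C)
    (p₀ q₀ p₁ q₁ : UpperHalfPlane)
    (hp₀ : p₀ ∈ frontier C) (hq₀ : q₀ ∈ frontier C)
    (hp₁ : p₁ ∈ frontier C) (hq₁ : q₁ ∈ frontier C)
    (α₀ : Path p₀ q₀) (α₁ : Path p₁ q₁)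
    (hinj₀ : Function.Injective α₀) (hinj₁ : Function.Injective α₁)
    (hrange₀ : Set.range α₀ ⊆ C) (hrange₁ : Set.range α₁ ⊆ C)
    (hdisj : Set.range α₀ ∩ Set.range α₁ ⊆
      (({p₀, q₀} : Set UpperHalfPlane) ∩ ({p₁, q₁} : Set UpperHalfPlane)))
    (hnoncol : ¬ ∃ u ∈ ({p₀, q₀, p₁, q₁} : Set UpperHalfPlane),
        ∃ v ∈ ({p₀, q₀, p₁, q₁} : Set UpperHalfPlane),
          ({p₀, q₀, p₁, q₁} : Set UpperHalfPlane) ⊆ hypSeg u v) :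
    (hypSeg p₀ q₀ \ {p₀, q₀}) ∩ (hypSeg p₁ q₁ \ {p₁, q₁}) = ∅ := by
  
  rw [Set.eq_empty_iff_forall_notMem]
  rintro x ⟨⟨hx0, hx0'⟩, ⟨hx1, hx1'⟩⟩
  simp only [Set.mem_insert_iff, Set.mem_singleton_iff, not_or] at hx0' hx1'
  have h01 : (0 : unitInterval) ≠ 1 := zero_ne_one
  have hne0 : p₀ ≠ q₀ := fun h => h01 (hinj₀ (by simp [h]))
  have hX0 : kmap x ∈ openSegment ℝ (kmap p₀) (kmap q₀) :=
    mem_openSegment_of_ne_left_right (fun h => hx0'.1 (kmap_injective h).symm)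
      (fun h => hx0'.2 (kmap_injective h).symm) ((mem_hypSeg_iff _ _ _).1 hx0)
  have hX1 : kmap x ∈ openSegment ℝ (kmap p₁) (kmap q₁) :=
    mem_openSegment_of_ne_left_right (fun h => hx1'.1 (kmap_injective h).symm)
      (fun h => hx1'.2 (kmap_injective h).symm) ((mem_hypSeg_iff _ _ _).1 hx1)
  by_cases hc0 : auxCross (kmap q₀ - kmap p₀) (kmap q₁ - kmap p₁) = 0
  · -- collinear case
    apply hnoncol
    have hu : kmap q₀ - kmap p₀ ≠ 0 := sub_ne_zero.2 (fun h => hne0 (kmap_injective h).symm)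
    obtain ⟨k, hk⟩ := aux_parallel hu hc0
    obtain ⟨s', s, hs', hs, hss, hXs⟩ := hX0
    obtain ⟨t', t, ht', ht, htt, hXt⟩ := hX1
    obtain rfl : s' = 1 - s := by linarith
    obtain rfl : t' = 1 - t := by linarith
    refine aux_collinear _ (Set.toFinite _) ⟨p₀, by simp⟩ (kmap x) (kmap q₀ - kmap p₀) ?_
    have hq1 : kmap q₁ = kmap p₁ + k • (kmap q₀ - kmap p₀) := by rw [← hk]; ring
    have hP1 : kmap p₁ = kmap x + (-(t * k)) • (kmap q₀ - kmap p₀) := by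
      rw [← hXt, hq1]; module
    intro w hw
    simp only [Set.mem_insert_iff, Set.mem_singleton_iff] at hw
    rcases hw with rfl | rfl | rfl | rfl
    · exact ⟨-s, by rw [← hXs]; module⟩
    · exact ⟨1 - s, by rw [← hXs]; module⟩
    · exact ⟨_, hP1⟩
    · exact ⟨k - t * k, by rw [hq1, hP1]; module⟩
  · -- transversal case
    have hD := kmap_image_convex C hCconv
    let a : C(unitInterval, ℂ) := ⟨fun t => kmap (α₀ t), kmap_continuous.comp α₀.continuous⟩
    let b : C(unitInterval, ℂ) := ⟨fun t => kmap (α₁ t), kmap_continuous.comp α₁.continuous⟩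
    have key : ∀ y, (y = p₀ ∨ y = q₀) → (y = p₁ ∨ y = q₁) → False := by
      intro y h0 h1
      apply hc0
      obtain ⟨s', s, hs', hs, hss, hXs⟩ := hX0
      obtain ⟨t', t, ht', ht, htt, hXt⟩ := hX1
      obtain rfl : s' = 1 - s := by linarith
      obtain rfl : t' = 1 - t := by linarith
      have r := congrArg Complex.re (hXs.trans hXt.symm)
      have i := congrArg Complex.im (hXs.trans hXt.symm)
      simp at r i
      have c1 : auxCross (kmap p₀ - kmap p₁) (kmap p₀ - kmap q₁) =
          s * auxCross (kmap q₀ - kmap p₀) (kmap q₁ - kmap p₁) := by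
        simp only [auxCross, Complex.sub_re, Complex.sub_im]
        linear_combination ((kmap p₁).im - (kmap q₁).im) * r - ((kmap p₁).re - (kmap q₁).re) * i
      have c3 : auxCross (kmap q₀ - kmap q₁) (kmap q₀ - kmap p₁) =
          (1 - s) * auxCross (kmap q₀ - kmap p₀) (kmap q₁ - kmap p₁) := by
        simp only [auxCross, Complex.sub_re, Complex.sub_im]
        linear_combination (-(kmap p₁).im + (kmap q₁).im) * r
          - (-(kmap p₁).re + (kmap q₁).re) * i
      have d1 : y = p₀ → auxCross (kmap p₀ - kmap p₁) (kmap p₀ - kmap q₁) = 0 := by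
        rintro rfl
        rcases h1 with rfl | rfl <;> simp [auxCross]
      have d3 : y = q₀ → auxCross (kmap q₀ - kmap q₁) (kmap q₀ - kmap p₁) = 0 := by
        rintro rfl
        rcases h1 with rfl | rfl <;> simp [auxCross]
      rcases h0 with h0 | h0
      · rw [d1 h0] at c1
        exact (mul_eq_zero.1 c1.symm).resolve_left hs.ne'
      · rw [d3 h0] at c3
        exact (mul_eq_zero.1 c3.symm).resolve_left hs'.ne'
    have hab : ∀ s t, a s ≠ b t := by
      intro s t h
      have h' : α₀ s = α₁ t := kmap_injective h
      have := hdisj ⟨⟨s, rfl⟩, ⟨t, h'.symm⟩⟩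
      simp only [Set.mem_inter_iff, Set.mem_insert_iff, Set.mem_singleton_iff] at this
      exact key _ this.1 this.2
    have ha : ∀ t, a t ∈ kmap '' C := fun t => ⟨_, hrange₀ ⟨t, rfl⟩, rfl⟩
    have hb : ∀ t, b t ∈ kmap '' C := fun t => ⟨_, hrange₁ ⟨t, rfl⟩, rfl⟩
    have ha0 : a 0 = kmap p₀ := by simp [a]
    have ha1 : a 1 = kmap q₀ := by simp [a]
    have hb0 : b 0 = kmap p₁ := by simp [b]
    have hb1 : b 1 = kmap q₁ := by simp [b]
    rcases lt_or_gt_of_ne hc0 with hlt | hgt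
    · refine aux_euclid hD (kmap_frontier hp₁) (kmap_frontier hq₁) (kmap_frontier hp₀)
        (kmap_frontier hq₀) b a hb0 hb1 ha0 ha1 hb ha (fun s t => (hab t s).symm) hX1 hX0 ?_
      unfold auxCross at hlt ⊢
      linarith
    · exact aux_euclid hD (kmap_frontier hp₀) (kmap_frontier hq₀) (kmap_frontier hp₁)
        (kmap_frontier hq₁) a b ha0 ha1 hb0 hb1 ha hb hab hX0 hX1 hgt
end
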